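/- Let n ≥ 2, let M be the position matrix of a single-shelf shuffle, let B be the n×n matrix with B(k,j) = (k−1)^{\underline{j−1}}, and set T = B^{−1} M B, with rows and columns of T indexed by 0 ≤ j,k ≤ n−1. For every even integer i with 0 ≤ i ≤ n−1, the vector w^{(i)} ∈ ℝ^n defined by w^{(i)}_t = 2^{i−t} B_{i−t} binom(i,t) (n−t−1)!/(n−i−1)! for 0 ≤ t ≤ i and w^{(i)}_t = 0 for i < t ≤ n−1 satisfies T w^{(i)} = 2^{−i} w^{(i)}. -/

import Mathlib

/-!
Write `N = n - 1` and let the column `t` of `Bmat n` be the function `y ↦ y^{\underline t}`. Two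
facts describe how `shelfM n` acts on it:

* `∑ y, C(x,y) y^{\underline t} = 2^{x-t} x^{\underline t}` (`sum_choose_mul_descFactorial`);
* `(N-y)^{\underline t} = ∑ s, (-1)^s C(t,s) (N-s)^{\underline{t-s}} y^{\underline s}`
  (`descFactorial_reflect`), a Vandermonde-type expansion of the reflected falling factorial.

Together they give `shelfM n * Bmat n = Bmat n * shelfT n` with `shelfT n` an explicit upper
triangular matrix, so `shelfT n` is the conjugate `T`. In row `s` of `shelfT n` applied to `wVec n i`,
the factorials and binomials collapse, with `m = i - s`, to the sum `∑ u, C(m,u) 2^u B_u`. This is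
`2^m` times the value of the `m`-th Bernoulli polynomial at `1/2`, namely `(2 - 2^m) B_m`
(`sum_choose_two_pow_bernoulli`). For `s` even the eigenvalue equation is then immediate; for `s`
odd, `m` is odd because `i` is even, and either `m = 1` or `B_m = 0`.
-/

open Matrix BigOperators

/-- Position matrix of a single-shelf shuffle on `n` cards (0-indexed). -/
noncomputable def shelfM (n : ℕ) : Matrix (Fin n) (Fin n) ℝ :=
  fun i j => (1/2 : ℝ)^(i.val + 1) *
    ((Nat.choose i.val j.val : ℝ) + (Nat.choose i.val (n - 1 - j.val) : ℝ))

/-- The change-of-basis matrix `B(k,j) = (k-1)^{\underline{j-1}}` (0-indexed). -/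
def Bmat (n : ℕ) : Matrix (Fin n) (Fin n) ℝ :=
  fun k j => (Nat.descFactorial k.val j.val : ℝ)

/-- The vector `w^{(i)}` with `w^{(i)}_t = 2^{i-t} B_{i-t} C(i,t) (n-t-1)!/(n-i-1)!` for
`t ≤ i` and `0` otherwise (coordinates indexed by `0 ≤ t ≤ n-1`). -/
noncomputable def wVec (n i : ℕ) : Fin n → ℝ :=
  fun t => if t.val ≤ i then
      (2 : ℝ)^(i - t.val) * ((bernoulli (i - t.val) : ℚ) : ℝ) * (Nat.choose i t.val : ℝ) *
        (Nat.factorial (n - t.val - 1) : ℝ) / (Nat.factorial (n - i - 1) : ℝ)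
    else 0

/-! ### Bernoulli polynomials at one half -/

open PowerSeries in
/-- With `β = z/(e^z-1)`, this is the coefficient form of `β(2z) (e^z + 1) = 2 β(z)`, which follows
from `e^{2z} - 1 = (e^z - 1)(e^z + 1)`. -/
lemma sum_choose_two_pow_bernoulli (m : ℕ) :
    ∑ u ∈ Finset.range (m + 1), (m.choose u : ℚ) * (2 ^ u * bernoulli u)
      = (2 - 2 ^ m) * bernoulli m := by
  have h1 := bernoulliPowerSeries_mul_exp_sub_one ℚ
  have h2 := congrArg (rescale (2 : ℚ)) h1
  have hE : rescale (2 : ℚ) (exp ℚ) = exp ℚ ^ 2 := by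
    have := exp_pow_eq_rescale_exp (A := ℚ) 2
    simpa using this.symm
  have hX : rescale (2 : ℚ) (X : PowerSeries ℚ) = 2 * X := by
    rw [rescale_X]; rfl
  rw [map_mul, map_sub, map_one, hE, hX] at h2
  have hne : (exp ℚ - 1 : PowerSeries ℚ) ≠ 0 := by
    intro h
    rw [h, mul_zero] at h1
    exact X_ne_zero h1.symm
  have h3 : rescale (2 : ℚ) (bernoulliPowerSeries ℚ) * exp ℚ
      = 2 * bernoulliPowerSeries ℚ - rescale (2 : ℚ) (bernoulliPowerSeries ℚ) := by
    apply mul_right_cancel₀ hne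
    linear_combination h2 - 2 * h1
  have h4 := congrArg (coeff m) h3
  have h2C : (2 : PowerSeries ℚ) = C (2 : ℚ) := rfl
  rw [h2C, map_sub, coeff_C_mul, coeff_rescale, coeff_mul,
    Finset.Nat.sum_antidiagonal_eq_sum_range_succ_mk] at h4
  simp only [coeff_rescale, bernoulliPowerSeries, coeff_mk, coeff_exp, Algebra.algebraMap_self,
    RingHom.id_apply] at h4
  have hm : (m.factorial : ℚ) ≠ 0 := by positivity
  calc _ = (m.factorial : ℚ) * ∑ k ∈ Finset.range m.succ,
        2 ^ k * (bernoulli k / k.factorial) * (1 / (m - k).factorial) := by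
        rw [Finset.mul_sum]
        refine Finset.sum_congr rfl fun k hk => ?_
        rw [Nat.cast_choose ℚ (Finset.mem_range_succ_iff.mp hk)]
        field_simp
    _ = _ := by
        rw [h4]
        field_simp

/-! ### Identities for falling factorials -/

/-- The factorial moments of the binomial distribution, scaled by `2 ^ x`. The exponent
`x - t` is split as `2 ^ x * (1 / 2) ^ t`, which avoids truncated subtraction when `x < t`. -/
lemma sum_choose_mul_descFactorial (n x t : ℕ) (hx : x < n) :
    ∑ y ∈ Finset.range n, (x.choose y : ℝ) * (y.descFactorial t : ℝ)
      = 2 ^ x * (1 / 2) ^ t * (x.descFactorial t : ℝ) := by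
  have hext : ∑ y ∈ Finset.range n, (x.choose y : ℝ) * (y.descFactorial t : ℝ)
      = ∑ y ∈ Finset.range (x + 1), (x.choose y : ℝ) * (y.descFactorial t : ℝ) := by
    symm
    apply Finset.sum_subset
    · intro y; simp only [Finset.mem_range]; omega
    · intro y _ hy
      rw [Finset.mem_range] at hy
      rw [Nat.choose_eq_zero_of_lt (by omega)]; simp
  rw [hext]
  rcases lt_or_ge x t with h | h
  · rw [Nat.descFactorial_of_lt h]
    simp only [Nat.cast_zero, mul_zero]
    refine Finset.sum_eq_zero fun y hy => ?_
    rw [Finset.mem_range] at hy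
    rw [Nat.descFactorial_of_lt (show y < t by omega)]; simp
  · obtain ⟨r, rfl⟩ := Nat.exists_eq_add_of_le h
    rw [add_assoc, Finset.sum_range_add, Finset.sum_eq_zero, zero_add]
    · have hterm : ∀ j, ((t + r).choose (t + j) : ℝ) * ((t + j).descFactorial t : ℝ)
          = ((t + r).descFactorial t : ℝ) * (r.choose j : ℝ) := by
        intro j
        have := Nat.choose_mul (n := t + r) (k := t + j) (s := t) (by omega)
        rw [Nat.add_sub_cancel_left, Nat.add_sub_cancel_left] at this
        rw [Nat.descFactorial_eq_factorial_mul_choose, Nat.descFactorial_eq_factorial_mul_choose]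
        have h' : ((t + r).choose (t + j) : ℝ) * ((t + j).choose t : ℝ)
          = ((t + r).choose t : ℝ) * (r.choose j : ℝ) := by exact_mod_cast this
        push_cast
        linear_combination (t.factorial : ℝ) * h'
      simp only [hterm]
      rw [← Finset.mul_sum]
      have hs : ∑ j ∈ Finset.range (r + 1), (r.choose j : ℝ) = 2 ^ r := by
        exact_mod_cast Nat.sum_range_choose r
      rw [hs, pow_add, one_div, inv_pow]
      field_simp
    · intro y hy
      rw [Finset.mem_range] at hy
      rw [Nat.descFactorial_of_lt hy]; simp

/-- Inclusion–exclusion form of the Vandermonde identity, by Pascal's rule in `y`. -/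
lemma choose_sub_eq_sum (y : ℕ) : ∀ N t : ℕ, y ≤ N →
    ((N - y).choose t : ℝ) = ∑ s ∈ Finset.range (t + 1),
      (-1) ^ s * (y.choose s : ℝ) * ((N - s).choose (t - s) : ℝ) := by
  induction y with
  | zero =>
    intro N t _
    rw [Finset.sum_range_succ']
    simp
  | succ y ih =>
    intro N t hN
    cases t with
    | zero => simp
    | succ t =>
      obtain ⟨K, rfl⟩ : ∃ K, N = K + 1 := ⟨N - 1, by omega⟩
      have e1 := ih K t (by omega)
      have e2 := ih (K + 1) (t + 1) (by omega)
      rw [Finset.sum_range_succ'] at e2 ⊢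
      have hp : ((K + 1 - y).choose (t + 1) : ℝ)
          = ((K - y).choose t : ℝ) + ((K - y).choose (t + 1) : ℝ) := by
        rw [show K + 1 - y = (K - y) + 1 by omega, Nat.choose_succ_succ]
        push_cast; ring
      have hs : ∑ k ∈ Finset.range (t + 1), (-1 : ℝ) ^ (k + 1) * ((y + 1).choose (k + 1) : ℝ)
            * ((K + 1 - (k + 1)).choose (t + 1 - (k + 1)) : ℝ)
          = - ∑ k ∈ Finset.range (t + 1), (-1 : ℝ) ^ k * (y.choose k : ℝ)
            * ((K - k).choose (t - k) : ℝ)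
          + ∑ k ∈ Finset.range (t + 1), (-1 : ℝ) ^ (k + 1) * (y.choose (k + 1) : ℝ)
            * ((K + 1 - (k + 1)).choose (t + 1 - (k + 1)) : ℝ) := by
        rw [← Finset.sum_neg_distrib, ← Finset.sum_add_distrib]
        refine Finset.sum_congr rfl fun k _ => ?_
        rw [Nat.choose_succ_succ, Nat.add_sub_add_right, Nat.add_sub_add_right]
        push_cast; ring
      rw [hs, ← e1, Nat.add_sub_add_right]
      rw [hp] at e2
      simp only [Nat.choose_zero_right] at e2 ⊢
      linear_combination e2

/-- Expansion of the reflected falling factorial `(n-1-y)^{\underline t}` in the falling factorials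
of `y`; this is `choose_sub_eq_sum` multiplied by `t!`. -/
lemma descFactorial_reflect (n y t : ℕ) (hy : y < n) (ht : t < n) :
    ((n - 1 - y).descFactorial t : ℝ) = ∑ s ∈ Finset.range n,
      (-1) ^ s * (t.choose s : ℝ) * ((n - 1 - s).descFactorial (t - s) : ℝ)
        * (y.descFactorial s : ℝ) := by
  have hsub : Finset.range (t + 1) ⊆ Finset.range n := by
    intro s; simp only [Finset.mem_range]; omega
  rw [← Finset.sum_subset hsub, Nat.descFactorial_eq_factorial_mul_choose, Nat.cast_mul,
    choose_sub_eq_sum y (n - 1) t (by omega), Finset.mul_sum]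
  · refine Finset.sum_congr rfl fun s hs => ?_
    have hst : s ≤ t := Finset.mem_range_succ_iff.mp hs
    rw [Nat.descFactorial_eq_factorial_mul_choose, Nat.descFactorial_eq_factorial_mul_choose,
      ← Nat.choose_mul_factorial_mul_factorial hst]
    push_cast; ring
  · intro s _ hs
    rw [Finset.mem_range] at hs
    rw [Nat.choose_eq_zero_of_lt (show t < s by omega)]; simp

/-! ### The shuffle in the basis of falling factorials -/

/-- The matrix of the shuffle in the basis of falling factorials, 0-indexed. The exponent `t - s` is
truncated only when `t < s`, where the factor `C(t,s)` vanishes. -/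
noncomputable def shelfT (n : ℕ) : Matrix (Fin n) (Fin n) ℝ :=
  fun s t => (1 / 2) * (1 / 2) ^ s.val * ((if s = t then 1 else 0)
    + (-1) ^ s.val * (t.val.choose s.val : ℝ)
      * ((n - 1 - s.val).descFactorial (t.val - s.val) : ℝ))

lemma shelfM_mul_Bmat (n : ℕ) : shelfM n * Bmat n = Bmat n * shelfT n := by
  ext x t
  have hpow : (1 / 2 : ℝ) ^ (x.val + 1) * 2 ^ x.val = 1 / 2 := by
    rw [pow_succ, mul_right_comm, ← mul_pow]; norm_num
  have hA := sum_choose_mul_descFactorial n x t x.2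
  have hB : ∑ y ∈ Finset.range n, (x.val.choose (n - 1 - y) : ℝ) * (y.descFactorial t : ℝ)
      = ∑ s ∈ Finset.range n, (-1) ^ s * (t.val.choose s : ℝ)
        * ((n - 1 - s).descFactorial (t - s) : ℝ)
        * (2 ^ x.val * (1 / 2) ^ s * (x.val.descFactorial s : ℝ)) := by
    -- The substitution `y ↦ n - 1 - y` moves the reflection onto the falling factorial.
    rw [← Finset.sum_range_reflect]
    calc _ = ∑ y ∈ Finset.range n, ∑ s ∈ Finset.range n, (x.val.choose y : ℝ) *
          ((-1) ^ s * (t.val.choose s : ℝ) * ((n - 1 - s).descFactorial (t - s) : ℝ)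
            * (y.descFactorial s : ℝ)) := by
          refine Finset.sum_congr rfl fun y hy => ?_
          rw [Finset.mem_range] at hy
          rw [← Finset.mul_sum, ← descFactorial_reflect n y t hy t.2,
            show n - 1 - (n - 1 - y) = y by omega]
      _ = _ := by
          rw [Finset.sum_comm]
          refine Finset.sum_congr rfl fun s _ => ?_
          rw [← sum_choose_mul_descFactorial n x s x.2, Finset.mul_sum]
          refine Finset.sum_congr rfl fun y _ => ?_
          ring
  have hL : (shelfM n * Bmat n) x t = (1 / 2 : ℝ) ^ (x.val + 1) *
      (∑ y ∈ Finset.range n, (x.val.choose y : ℝ) * (y.descFactorial t : ℝ)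
        + ∑ y ∈ Finset.range n, (x.val.choose (n - 1 - y) : ℝ) * (y.descFactorial t : ℝ)) := by
    rw [Matrix.mul_apply, ← Finset.sum_add_distrib, Finset.sum_range, Finset.mul_sum]
    refine Finset.sum_congr rfl fun y _ => ?_
    simp only [shelfM, Bmat]; ring
  have hR : (Bmat n * shelfT n) x t = (1 / 2) * ((1 / 2) ^ t.val * (x.val.descFactorial t : ℝ)
      + ∑ s ∈ Finset.range n, (-1) ^ s * (t.val.choose s : ℝ)
        * ((n - 1 - s).descFactorial (t - s) : ℝ)
        * ((1 / 2) ^ s * (x.val.descFactorial s : ℝ))) := by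
    have hδ : (1 / 2 : ℝ) ^ t.val * (x.val.descFactorial t : ℝ)
        = ∑ s : Fin n, if s = t then (1 / 2 : ℝ) ^ s.val * (x.val.descFactorial s : ℝ) else 0 := by
      simp
    rw [Matrix.mul_apply, hδ, Finset.sum_range, ← Finset.sum_add_distrib, Finset.mul_sum]
    refine Finset.sum_congr rfl fun s _ => ?_
    simp only [shelfT, Bmat]
    split_ifs <;> ring
  have hpull : ∑ s ∈ Finset.range n, (-1) ^ s * (t.val.choose s : ℝ)
        * ((n - 1 - s).descFactorial (t - s) : ℝ)
        * (2 ^ x.val * (1 / 2) ^ s * (x.val.descFactorial s : ℝ))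
      = 2 ^ x.val * ∑ s ∈ Finset.range n, (-1) ^ s * (t.val.choose s : ℝ)
        * ((n - 1 - s).descFactorial (t - s) : ℝ)
        * ((1 / 2) ^ s * (x.val.descFactorial s : ℝ)) := by
    rw [Finset.mul_sum]
    exact Finset.sum_congr rfl fun s _ => by ring
  rw [hL, hR, hA, hB, hpull]
  linear_combination ((1 / 2) ^ t.val * (x.val.descFactorial t : ℝ)
      + ∑ s ∈ Finset.range n, (-1) ^ s * (t.val.choose s : ℝ)
        * ((n - 1 - s).descFactorial (t - s) : ℝ)
        * ((1 / 2) ^ s * (x.val.descFactorial s : ℝ))) * hpow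

/-- `Bmat n` is lower triangular with the factorials on its diagonal. -/
lemma isUnit_det_Bmat (n : ℕ) : IsUnit (Bmat n).det := by
  rw [Matrix.det_of_isLowerTriangular (Bmat n), isUnit_iff_ne_zero, Finset.prod_ne_zero_iff]
  · intro k _
    simp only [Bmat, Nat.descFactorial_self]
    positivity
  · intro i j hij
    have h : i.val < j.val := hij
    simp only [Bmat, Nat.descFactorial_of_lt h, Nat.cast_zero]

/-! ### The eigenvector equation -/

lemma choose_mul_choose_sub {i s u : ℕ} (hs : s ≤ i) (hu : u ≤ i) :
    i.choose (i - u) * (i - u).choose s = i.choose s * (i - s).choose u := by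
  rcases le_or_gt s (i - u) with h | h
  · rw [Nat.choose_mul h, ← Nat.choose_symm (show u ≤ i - s by omega),
      show i - u - s = i - s - u by omega]
  · rw [Nat.choose_eq_zero_of_lt h, Nat.choose_eq_zero_of_lt (show i - s < u by omega)]
    simp

/-- The contribution of the reflected half of the shuffle to row `s` of the eigenvalue equation. -/
lemma sum_choose_descFactorial_wVec (n i s : ℕ) (hi : i < n) (hs : s ≤ i) :
    ∑ t : Fin n, (t.val.choose s : ℝ) * ((n - 1 - s).descFactorial (t.val - s) : ℝ) * wVec n i t
      = ((n - s - 1).factorial : ℝ) / ((n - i - 1).factorial : ℝ) * (i.choose s : ℝ)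
        * ((2 - 2 ^ (i - s)) * ((bernoulli (i - s) : ℚ) : ℝ)) := by
  have hb : ((2 - 2 ^ (i - s)) * ((bernoulli (i - s) : ℚ) : ℝ))
      = ∑ u ∈ Finset.range (i + 1), ((i - s).choose u : ℝ) * (2 ^ u * ((bernoulli u : ℚ) : ℝ)) := by
    have h := congrArg (fun q : ℚ => (q : ℝ)) (sum_choose_two_pow_bernoulli (i - s))
    push_cast at h
    rw [← h]
    apply Finset.sum_subset
    · intro u; simp only [Finset.mem_range]; omega
    · intro u _ hu
      rw [Finset.mem_range] at hu
      rw [Nat.choose_eq_zero_of_lt (show i - s < u by omega)]; simp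
  have hw : ∑ t : Fin n, (t.val.choose s : ℝ) * ((n - 1 - s).descFactorial (t.val - s) : ℝ)
        * wVec n i t
      = ∑ t ∈ Finset.range (i + 1), (t.choose s : ℝ) * ((n - 1 - s).descFactorial (t - s) : ℝ)
        * ((2 : ℝ) ^ (i - t) * ((bernoulli (i - t) : ℚ) : ℝ) * (i.choose t : ℝ) *
          ((n - t - 1).factorial : ℝ) / ((n - i - 1).factorial : ℝ)) := by
    simp only [wVec]
    rw [← Finset.sum_range fun t => (t.choose s : ℝ) * ((n - 1 - s).descFactorial (t - s) : ℝ)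
        * (if t ≤ i then (2 : ℝ) ^ (i - t) * ((bernoulli (i - t) : ℚ) : ℝ) * (i.choose t : ℝ) *
          ((n - t - 1).factorial : ℝ) / ((n - i - 1).factorial : ℝ) else 0)]
    symm
    apply Finset.sum_subset_zero_on_sdiff
    · intro t; simp only [Finset.mem_range]; omega
    · intro t ht
      rw [Finset.mem_sdiff, Finset.mem_range, Finset.mem_range] at ht
      rw [if_neg (by omega), mul_zero]
    · intro t ht
      rw [if_pos (Finset.mem_range_succ_iff.mp ht)]
  rw [hw, hb, ← Finset.sum_range_reflect, Finset.mul_sum]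
  refine Finset.sum_congr rfl fun u hu => ?_
  have hu' : u ≤ i := Finset.mem_range_succ_iff.mp hu
  rw [Nat.add_sub_cancel, Nat.sub_sub_self hu']
  rcases le_or_gt s (i - u) with h | h
  · have hc : (i.choose (i - u) : ℝ) * ((i - u).choose s : ℝ)
        = (i.choose s : ℝ) * ((i - s).choose u : ℝ) := by
      exact_mod_cast choose_mul_choose_sub hs hu'
    have hf : ((n - (i - u) - 1).factorial : ℝ)
        * ((n - 1 - s).descFactorial (i - u - s) : ℝ) = ((n - s - 1).factorial : ℝ) := by
      have := Nat.factorial_mul_descFactorial (n := n - 1 - s) (k := i - u - s) (by omega)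
      rw [show n - 1 - s - (i - u - s) = n - (i - u) - 1 by omega] at this
      rw [show n - s - 1 = n - 1 - s by omega]
      exact_mod_cast this
    rw [← hf]
    linear_combination ((n - (i - u) - 1).factorial : ℝ)
        * ((n - 1 - s).descFactorial (i - u - s) : ℝ) * 2 ^ u * ((bernoulli u : ℚ) : ℝ)
        / ((n - i - 1).factorial : ℝ) * hc
  · rw [Nat.choose_eq_zero_of_lt h, Nat.choose_eq_zero_of_lt (show i - s < u by omega)]
    simp

lemma shelfT_mulVec_wVec (n i : ℕ) (hi : i < n) (hie : Even i) :
    (shelfT n).mulVec (wVec n i) = ((1 / 2 : ℝ) ^ i) • wVec n i := by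
  ext s
  have hrow : (shelfT n).mulVec (wVec n i) s = (1 / 2) * (1 / 2) ^ s.val * (wVec n i s
      + (-1) ^ s.val * ∑ t : Fin n, (t.val.choose s.val : ℝ)
        * ((n - 1 - s.val).descFactorial (t.val - s.val) : ℝ) * wVec n i t) := by
    have hδ : wVec n i s = ∑ t : Fin n, if s = t then wVec n i t else 0 := by simp
    rw [Matrix.mulVec, dotProduct]
    conv_rhs => rw [hδ]
    rw [Finset.mul_sum, ← Finset.sum_add_distrib, Finset.mul_sum]
    refine Finset.sum_congr rfl fun t _ => ?_
    simp only [shelfT]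
    split_ifs <;> ring
  rw [hrow, Pi.smul_apply, smul_eq_mul]
  rcases le_or_gt s.val i with hs | hs
  · rw [sum_choose_descFactorial_wVec n i s hi hs]
    simp only [wVec, if_pos hs]
    obtain ⟨m, rfl⟩ := Nat.exists_eq_add_of_le hs
    rw [Nat.add_sub_cancel_left]
    have hpow : (1 / 2 : ℝ) ^ (s.val + m) * 2 ^ m = (1 / 2) ^ s.val := by
      rw [pow_add, mul_assoc, ← mul_pow]; norm_num
    have key : (2 ^ m + (-1) ^ s.val * (2 - 2 ^ m)) * ((bernoulli m : ℚ) : ℝ)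
        = 2 * ((bernoulli m : ℚ) : ℝ) := by
      rcases Nat.even_or_odd s.val with h | h
      · rw [h.neg_one_pow]; ring
      · rw [h.neg_one_pow]
        have hm : Odd m := by
          by_contra hm
          rw [Nat.not_odd_iff_even] at hm
          exact (Nat.not_even_iff_odd.mpr (h.add_even hm)) hie
        rcases eq_or_ne m 1 with rfl | h1
        · norm_num
        · rw [bernoulli_eq_zero_of_odd hm (by have := hm.pos; omega)]; simp
    linear_combination ((s.val + m).choose s.val : ℝ) * ((n - s.val - 1).factorial : ℝ)
      / ((n - (s.val + m) - 1).factorial : ℝ) * ((1 / 2) * (1 / 2) ^ s.val * key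
        - ((bernoulli m : ℚ) : ℝ) * hpow)
  · have hz : ∑ t : Fin n, (t.val.choose s.val : ℝ)
        * ((n - 1 - s.val).descFactorial (t.val - s.val) : ℝ) * wVec n i t = 0 := by
      refine Finset.sum_eq_zero fun t _ => ?_
      rcases le_or_gt t.val i with ht | ht
      · rw [Nat.choose_eq_zero_of_lt (show t.val < s.val by omega)]; simp
      · rw [wVec, if_neg (by omega)]; simp
    have hws : wVec n i s = 0 := by rw [wVec, if_neg (by omega)]
    rw [hz, hws]; simp

theorem w_is_eigenvector_of_T (n : ℕ) (hn : 2 ≤ n) (i : ℕ) (hi : i ≤ n - 1) (hie : Even i) :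
    ((Bmat n)⁻¹ * shelfM n * Bmat n).mulVec (wVec n i) = ((1/2 : ℝ)^i) • wVec n i := by
  have hT : (Bmat n)⁻¹ * shelfM n * Bmat n = shelfT n := by
    rw [Matrix.mul_assoc, shelfM_mul_Bmat, ← Matrix.mul_assoc,
      Matrix.nonsing_inv_mul _ (isUnit_det_Bmat n), Matrix.one_mul]
  rw [hT]
  exact shelfT_mulVec_wVec n i (by omega) hie
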